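/- Deterministic embedding property of the concatenated (fast-then-Gaussian) sketch (core of Lemma F.1): Let B ∈ ℝ^{n×d}, b ∈ ℝ, and let A := [Bᵀ, b·I_d]ᵀ ∈ ℝ^{(n+d)×d}. Let χ ∈ (0,1], k₁, k₂ ∈ ℕ, let S_H ∈ ℝ^{k₂×n}, define the block matrix Ŝ_H ∈ ℝ^{(k₂+d)×(n+d)} with S_H in the top-left block, I_d in the bottom-right block, and zeros elsewhere, let S_G ∈ ℝ^{k₁×(k₂+d)}, and set S_tot := S_G·Ŝ_H. Assume: (i) for all u ∈ ℝⁿ and v ∈ ℝ^d, |uᵀ(S_HᵀS_H − I_n)Bv| ≤ (χ/2)·‖u‖·‖Bv‖; (ii) for all v ∈ ℝ^d, ‖S_H·Bv‖² ≥ (1 − χ)·‖Bv‖²; (iii) for all w ∈ ℝ^{k₂+d} and v ∈ ℝ^d, |wᵀ((1/k₁)·S_GᵀS_G − I_{k₂+d})·Ŝ_H·Av| ≤ (χ/2)·‖w‖·‖Ŝ_H·Av‖; (iv) for all v ∈ ℝ^d, ‖S_G·Ŝ_H·Av‖² ≥ (1 − χ)·k₁·‖Ŝ_H·Av‖². Then: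 for all v ∈ ℝ^d, ‖S_tot·Av‖² ≥ (1 − χ)²·k₁·‖Av‖², and for all w, v ∈ ℝ^d, |wᵀAᵀ((1/k₁)·S_totᵀS_tot − I_{n+d})·Av| ≤ (5/4)·χ·‖Aw‖·‖Av‖. -/

import Mathlib

/-!
Write `Ŝ` for the block sketch `diag (SH, I)`. Adding and subtracting `(Ŝ A)ᵀ (Ŝ A)` splits the
error of the concatenated sketch into the error of the Gaussian sketch on the range of `Ŝ A` and
the error of the fast sketch on the range of `A`; since `Ŝ` is the identity on the lower block, the
latter only sees `B`:
`Aᵀ (c Stotᵀ Stot - 1) A = (Ŝ A)ᵀ (c SGᵀ SG - 1) (Ŝ A) + Bᵀ (SHᵀ SH - 1) B` (`error_split`).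
The hypotheses bound the two terms by `(χ / 2) ‖Ŝ A w‖ ‖Ŝ A v‖` and `(χ / 2) ‖B w‖ ‖B v‖`.
Taking `u = B v` in the hypothesis on `SH` gives `‖Ŝ A v‖² ≤ (1 + χ / 2) ‖A v‖²`, so the sum is at
most `(χ / 2) (1 + χ / 2) + χ / 2 ≤ (5 / 4) χ` times `‖A w‖ ‖A v‖`. The lower bound is the
composition of the two lower bounds, using `‖Ŝ A v‖² = ‖SH B v‖² + b² ‖v‖²`.
-/

open Matrix

noncomputable def norm2 {ι : Type*} [Fintype ι] (v : ι → ℝ) : ℝ :=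
  Real.sqrt (∑ i, v i ^ 2)

lemma norm2_nonneg {ι : Type*} [Fintype ι] (v : ι → ℝ) : 0 ≤ norm2 v := Real.sqrt_nonneg _

lemma norm2_sq {ι : Type*} [Fintype ι] (v : ι → ℝ) : norm2 v ^ 2 = v ⬝ᵥ v := by
  rw [norm2, Real.sq_sqrt (Finset.sum_nonneg fun i _ => sq_nonneg _)]
  simp [dotProduct, sq]

lemma le_of_sq_le {x y : ℝ} (h : x ^ 2 ≤ y ^ 2) (hy : 0 ≤ y) : x ≤ y :=
  abs_le_of_sq_le_sq' h hy |>.2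

lemma dotProduct_transpose_mul_mulVec {ι κ : Type*} [Fintype ι] [Fintype κ]
    (P Q : Matrix ι κ ℝ) (w v : κ → ℝ) :
    w ⬝ᵥ (Pᵀ * Q).mulVec v = (P.mulVec w) ⬝ᵥ (Q.mulVec v) := by
  rw [← mulVec_mulVec, dotProduct_mulVec, vecMul_transpose]

lemma norm2_sq_fromRows {ι κ : Type*} [Fintype ι] [Fintype κ] [DecidableEq κ]
    (C : Matrix ι κ ℝ) (b : ℝ) (v : κ → ℝ) :
    norm2 ((fromRows C (b • (1 : Matrix κ κ ℝ))).mulVec v) ^ 2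
      = norm2 (C.mulVec v) ^ 2 + b ^ 2 * norm2 v ^ 2 := by
  simp only [norm2_sq, fromRows_mulVec, sumElim_dotProduct_sumElim, smul_mulVec, one_mulVec,
    smul_dotProduct, dotProduct_smul, smul_eq_mul]
  ring

lemma blockSketch_mul {m ι κ : Type*} [Fintype ι] [Fintype κ] [DecidableEq κ]
    (S : Matrix m ι ℝ) (B : Matrix ι κ ℝ) (b : ℝ) :
    fromBlocks S 0 0 (1 : Matrix κ κ ℝ) * fromRows B (b • (1 : Matrix κ κ ℝ))
      = fromRows (S * B) (b • (1 : Matrix κ κ ℝ)) := by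
  simp [fromBlocks_mul_fromRows]

/-- The error of the concatenated sketch is the error of the outer sketch on the range of `Ŝ A`
plus the error of the inner sketch on the range of `B`; the identity blocks cancel. -/
lemma error_split {m p ι κ : Type*} [Fintype m] [Fintype p] [Fintype ι] [Fintype κ]
    [DecidableEq p] [DecidableEq ι] [DecidableEq κ] (SG : Matrix m (p ⊕ κ) ℝ) (S : Matrix p ι ℝ)
    (B : Matrix ι κ ℝ) (b c : ℝ) :
    let A := fromRows B (b • (1 : Matrix κ κ ℝ))
    let Sh := fromBlocks S 0 0 (1 : Matrix κ κ ℝ)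
    Aᵀ * (c • ((SG * Sh)ᵀ * (SG * Sh)) - 1) * A
      = (Sh * A)ᵀ * ((c • (SGᵀ * SG) - 1) * (Sh * A)) + Bᵀ * ((Sᵀ * S - 1) * B) := by
  intro A Sh
  have hA : Aᵀ * A = Bᵀ * B + (b * b) • (1 : Matrix κ κ ℝ) := by
    simp [A, transpose_fromRows, fromCols_mul_fromRows, smul_smul]
  have hS : (Sh * A)ᵀ * (Sh * A) = (S * B)ᵀ * (S * B) + (b * b) • (1 : Matrix κ κ ℝ) := by
    simp only [A, Sh, blockSketch_mul]
    simp [transpose_fromRows, fromCols_mul_fromRows, smul_smul]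
  have h1 : Aᵀ * (c • ((SG * Sh)ᵀ * (SG * Sh)) - 1) * A
      = c • ((SG * (Sh * A))ᵀ * (SG * (Sh * A))) - Aᵀ * A := by
    simp only [Matrix.mul_sub, Matrix.sub_mul, transpose_mul, Matrix.mul_smul, Matrix.smul_mul,
      Matrix.mul_one, Matrix.mul_assoc]
  have h2 : (Sh * A)ᵀ * ((c • (SGᵀ * SG) - 1) * (Sh * A))
      = c • ((SG * (Sh * A))ᵀ * (SG * (Sh * A))) - (Sh * A)ᵀ * (Sh * A) := by
    simp only [Matrix.mul_sub, Matrix.sub_mul, transpose_mul, Matrix.mul_smul, Matrix.smul_mul,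
      Matrix.one_mul, Matrix.mul_assoc]
  have h3 : Bᵀ * ((Sᵀ * S - 1) * B) = (S * B)ᵀ * (S * B) - Bᵀ * B := by
    simp only [Matrix.mul_sub, Matrix.sub_mul, transpose_mul, Matrix.one_mul, Matrix.mul_assoc]
  rw [h1, h2, h3, hA, hS]
  abel

theorem stmt19 {n d k₁ k₂ : ℕ} (B : Matrix (Fin n) (Fin d) ℝ) (b : ℝ)
    (χ : ℝ) (hχ0 : 0 < χ) (hχ1 : χ ≤ 1)
    (SH : Matrix (Fin k₂) (Fin n) ℝ) (SG : Matrix (Fin k₁) (Fin k₂ ⊕ Fin d) ℝ) :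
    let A : Matrix (Fin n ⊕ Fin d) (Fin d) ℝ :=
      Matrix.fromRows B (b • (1 : Matrix (Fin d) (Fin d) ℝ))
    let SHhat : Matrix (Fin k₂ ⊕ Fin d) (Fin n ⊕ Fin d) ℝ :=
      Matrix.fromBlocks SH 0 0 (1 : Matrix (Fin d) (Fin d) ℝ)
    let Stot : Matrix (Fin k₁) (Fin n ⊕ Fin d) ℝ := SG * SHhat
    (∀ (u : Fin n → ℝ) (v : Fin d → ℝ),
        |u ⬝ᵥ ((SHᵀ * SH - 1) * B).mulVec v| ≤ (χ / 2) * norm2 u * norm2 (B.mulVec v)) →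
    (∀ v : Fin d → ℝ,
        (1 - χ) * norm2 (B.mulVec v) ^ 2 ≤ norm2 ((SH * B).mulVec v) ^ 2) →
    (∀ (w : (Fin k₂ ⊕ Fin d) → ℝ) (v : Fin d → ℝ),
        |w ⬝ᵥ (((1 / (k₁ : ℝ)) • (SGᵀ * SG) - 1) * (SHhat * A)).mulVec v| ≤
          (χ / 2) * norm2 w * norm2 ((SHhat * A).mulVec v)) →
    (∀ v : Fin d → ℝ,
        (1 - χ) * (k₁ : ℝ) * norm2 ((SHhat * A).mulVec v) ^ 2 ≤
          norm2 ((SG * (SHhat * A)).mulVec v) ^ 2) →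
    ((∀ v : Fin d → ℝ,
        (1 - χ) ^ 2 * (k₁ : ℝ) * norm2 (A.mulVec v) ^ 2 ≤ norm2 ((Stot * A).mulVec v) ^ 2) ∧
      (∀ w v : Fin d → ℝ,
        |w ⬝ᵥ (Aᵀ * ((1 / (k₁ : ℝ)) • (Stotᵀ * Stot) - 1) * A).mulVec v| ≤
          (5 / 4) * χ * norm2 (A.mulVec w) * norm2 (A.mulVec v))) := by
  intro A SHhat Stot h1 h2 h3 h4
  have hM (v : Fin d → ℝ) : norm2 ((SHhat * A).mulVec v) ^ 2
      = norm2 ((SH * B).mulVec v) ^ 2 + b ^ 2 * norm2 v ^ 2 := by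
    simp only [SHhat, A, blockSketch_mul, norm2_sq_fromRows]
  have hN (v : Fin d → ℝ) : norm2 (A.mulVec v) ^ 2
      = norm2 (B.mulVec v) ^ 2 + b ^ 2 * norm2 v ^ 2 := norm2_sq_fromRows B b v
  have hb (v : Fin d → ℝ) : 0 ≤ b ^ 2 * norm2 v ^ 2 := by positivity
  have hBA (v : Fin d → ℝ) : norm2 (B.mulVec v) ≤ norm2 (A.mulVec v) :=
    le_of_sq_le (by linarith [hN v, hb v]) (norm2_nonneg _)
  have hup (v : Fin d → ℝ) :
      norm2 ((SHhat * A).mulVec v) ^ 2 ≤ (1 + χ / 2) * norm2 (A.mulVec v) ^ 2 := by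
    have h := (abs_le.mp (h1 (B.mulVec v) v)).2
    have e : B.mulVec v ⬝ᵥ ((SHᵀ * SH - 1) * B).mulVec v
        = norm2 ((SH * B).mulVec v) ^ 2 - norm2 (B.mulVec v) ^ 2 := by
      rw [Matrix.sub_mul, Matrix.one_mul, sub_mulVec, dotProduct_sub, Matrix.mul_assoc,
        ← mulVec_mulVec, dotProduct_mulVec, vecMul_transpose, mulVec_mulVec, norm2_sq, norm2_sq]
    rw [e] at h
    rw [hM, hN]
    nlinarith [mul_nonneg hχ0.le (hb v)]
  refine ⟨fun v => ?_, fun w v => ?_⟩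
  · have hlow : (1 - χ) * norm2 (A.mulVec v) ^ 2 ≤ norm2 ((SHhat * A).mulVec v) ^ 2 := by
      rw [hM, hN]
      nlinarith [mul_nonneg hχ0.le (hb v), h2 v]
    have h := h4 v
    rw [← Matrix.mul_assoc] at h
    refine le_trans ?_ h
    have hc : 0 ≤ (1 - χ) * (k₁ : ℝ) := mul_nonneg (by linarith) (Nat.cast_nonneg _)
    calc (1 - χ) ^ 2 * (k₁ : ℝ) * norm2 (A.mulVec v) ^ 2
        = (1 - χ) * (k₁ : ℝ) * ((1 - χ) * norm2 (A.mulVec v) ^ 2) := by ring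
      _ ≤ _ := mul_le_mul_of_nonneg_left hlow hc
  · rw [error_split SG SH B b (1 / (k₁ : ℝ)), add_mulVec, dotProduct_add,
      dotProduct_transpose_mul_mulVec, dotProduct_transpose_mul_mulVec]
    refine (abs_add_le _ _).trans
      ((add_le_add (h3 ((SHhat * A).mulVec w) v) (h1 (B.mulVec w) v)).trans ?_)
    have hBB : norm2 (B.mulVec w) * norm2 (B.mulVec v)
        ≤ norm2 (A.mulVec w) * norm2 (A.mulVec v) :=
      mul_le_mul (hBA w) (hBA v) (norm2_nonneg _) (norm2_nonneg _)
    have hAA : 0 ≤ norm2 (A.mulVec w) * norm2 (A.mulVec v) :=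
      mul_nonneg (norm2_nonneg _) (norm2_nonneg _)
    have hSS : norm2 ((SHhat * A).mulVec w) * norm2 ((SHhat * A).mulVec v)
        ≤ (1 + χ / 2) * (norm2 (A.mulVec w) * norm2 (A.mulVec v)) := by
      refine le_of_sq_le ?_ (by positivity)
      have := mul_le_mul (hup w) (hup v) (sq_nonneg _) (by positivity)
      linarith
    have h5 := mul_le_mul_of_nonneg_left hSS (half_pos hχ0).le
    have h6 := mul_le_mul_of_nonneg_left hBB (half_pos hχ0).le
    -- This is where `χ ≤ 1` enters: `1 + χ / 2 ≤ 3 / 2`.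
    have h7 : χ / 2 * ((1 + χ / 2) * (norm2 (A.mulVec w) * norm2 (A.mulVec v)))
        ≤ 3 / 4 * χ * (norm2 (A.mulVec w) * norm2 (A.mulVec v)) := by
      rw [← mul_assoc]
      exact mul_le_mul_of_nonneg_right (by nlinarith) hAA
    linarith
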